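/- For every integer d ≥ 1, let N = 2d+1 and define the Chafee-Infante permutation σ_d of {1,…,N} by σ_d(j) = j for odd j and σ_d(j) = N+1−j for even j. Then: σ_d is a dissipative permutation; σ_d is an involution, σ_d^{−1} = σ_d; σ_d commutes with the flip, κ∘σ_d∘κ = σ_d where κ(j) = N+1−j; σ_d is Morse; and its Morse counts are #{ j : i_j = i } = 2 for every 0 ≤ i ≤ d−1, = 1 for i = d, and = 0 for i > d. -/

import Mathlib

/-- Morse numbers `i_j` of a permutation `σ` of `{1,…,N}` (extended to `ℕ`),
via the recursion `i_1 = 0`,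
`i_{j+1} = i_j + (-1)^(j+1) * sign (σ⁻¹(j+1) - σ⁻¹(j))`. -/
def morse (σ : Equiv.Perm ℕ) : ℕ → ℤ
  | 0 => 0
  | 1 => 0
  | (j+2) => morse σ (j+1) +
      (-1)^(j+2) * Int.sign ((σ.symm (j+2) : ℤ) - (σ.symm (j+1) : ℤ))

/-- Zero numbers `z_{j k}`, recursion in the first index `j`, second index `k` fixed:
`z_{1k} = 0`, `z_{kk} = i_k`, `z_{k+1,k} = min (i_k, i_{k+1})`, and otherwise
`z_{j+1,k} = z_{jk} + ((-1)^(j+1)/2) * (sign (σ⁻¹(j+1) - σ⁻¹(k)) - sign (σ⁻¹(j) - σ⁻¹(k)))`. -/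
def zrec (σ : Equiv.Perm ℕ) (k : ℕ) : ℕ → ℤ
  | 0 => 0
  | 1 => 0
  | (j+2) =>
      if j+2 = k then morse σ k
      else if j+1 = k then min (morse σ k) (morse σ (k+1))
      else zrec σ k (j+1) +
        ((-1)^(j+2) * (Int.sign ((σ.symm (j+2) : ℤ) - (σ.symm k : ℤ))
          - Int.sign ((σ.symm (j+1) : ℤ) - (σ.symm k : ℤ)))) / 2

/-- The zero number `z_{m n}`. -/
def zfun (σ : Equiv.Perm ℕ) (m n : ℕ) : ℤ := zrec σ n m

/-- The connection digraph of a dissipative Morse permutation `σ` of `{1,…,N}`: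
an edge `m ⤳ n` iff `i_m = i_n + 1` and no `w` strictly between `m` and `n`
blocks, i.e. satisfies `z_{mw} = z_{wn} = z_{mn}`. -/
def hasEdge (N : ℕ) (σ : Equiv.Perm ℕ) (m n : ℕ) : Prop :=
  1 ≤ m ∧ m ≤ N ∧ 1 ≤ n ∧ n ≤ N ∧
  morse σ m = morse σ n + 1 ∧
  ¬ ∃ w : ℕ, min m n < w ∧ w < max m n ∧
      zfun σ m w = zfun σ w n ∧ zfun σ w n = zfun σ m n

/-- A dissipative permutation of `{1,…,N}`. -/
def Dissipative (N : ℕ) (σ : Equiv.Perm ℕ) : Prop :=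
  Set.BijOn σ (Set.Icc 1 N) (Set.Icc 1 N) ∧ σ 1 = 1 ∧ σ N = N

/-- The Morse property: all Morse numbers are nonnegative. -/
def MorseProp (N : ℕ) (σ : Equiv.Perm ℕ) : Prop :=
  ∀ j, 1 ≤ j → j ≤ N → 0 ≤ morse σ j

/-- Morse counts `μ(i) = #{j ∈ {1,…,N} : i_j = i}`. -/
def morseCount (N : ℕ) (σ : Equiv.Perm ℕ) (i : ℤ) : ℕ :=
  ((Finset.Icc 1 N).filter (fun j => morse σ j = i)).card

/-- The primitive 3-nose permutation `σ_{rq}` of `{1,…,N}`, `N = 2(r+1)(q+1)-1`,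
characterized by its defining relations, extended to a permutation of `ℕ`
fixing everything outside `{1,…,N}`. -/
def SigmaRQ (r q : ℕ) (σ : Equiv.Perm ℕ) : Prop :=
  (∀ a, a ∉ Set.Icc 1 (2*(r+1)*(q+1) - 1) → σ a = a) ∧
  (∀ j k, j ≤ r → k ≤ q →
    σ (2*((q+1)*j+k)+1) = 2*(j+(r+1)*k)+1) ∧
  (∀ j k, j ≤ r → k ≤ q → ¬(j = 0 ∧ k = 0) →
    σ (2*((q+1)*(r-j)+(q-k)+1)) = 2*(j+(r+1)*k))

/-- Tags `A`, `B` of equilibrium labels `A^j_k`, `B^j_k`. -/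
inductive Tag | A | B
deriving DecidableEq

/-- The axis position (`h_1`-position) of the label `L^j_k` for parameters `(r,q)`. -/
def axisPos (r q : ℕ) : Tag → ℕ → ℕ → ℕ
  | Tag.A, j, k => if Odd j then (q+1)*(j-1)+k+1 else (q+1)*(2*r+1-j)+(q-k)+1
  | Tag.B, j, k => if Odd j then (q+1)*j+(q-k)+1 else (q+1)*(2*r-j)+k+1

/-- The meander position (`h_0`-position) of the label `L^j_k` for parameters `(r,q)`. -/
def meanderPos (r q : ℕ) : Tag → ℕ → ℕ → ℕ
  | Tag.A, j, k => if Odd k then (r+1)*(2*q+1-k)+(2*r+1-j) else (r+1)*k+j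
  | Tag.B, j, k => if Odd k then (r+1)*(2*q+1-k)+j else (r+1)*(k+1)+(r-j)

/-- The suspension `σ̃` of a dissipative permutation `σ` of `{1,…,N}`:
`σ̃(1) = 1`, `σ̃(N+2) = N+2`, and `σ̃(a+1) = N+2 - σ(a)` for `1 ≤ a ≤ N`. -/
def IsSuspension (N : ℕ) (σ σt : Equiv.Perm ℕ) : Prop :=
  σt 1 = 1 ∧ σt (N+2) = N+2 ∧ ∀ a, 1 ≤ a → a ≤ N → σt (a+1) = N+2 - σ a

/-- The label `A^0_0` is the distinguished (formal) vertex `⋆`. -/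
def IsStar (L : Tag) (j k : ℕ) : Prop := L = Tag.A ∧ j = 0 ∧ k = 0

/-- Tag swap `A ↔ B`, used by the reversor. -/
def tagSwap : Tag → Tag
  | Tag.A => Tag.B
  | Tag.B => Tag.A

/-!
In coordinates centred at `d + 1`, the Chafee-Infante permutation is multiplication by `± 1`:
`σ j - (d + 1) = (-1) ^ j * ((d + 1) - j)`. The sign cancels the alternating factor in the recursion
for the Morse numbers, so that `i_{j+1} - i_j` is the sign of `2 * d + 1 - 2 * j`: the Morse numbers
increase by one up to `j = d + 1` and decrease by one from there on.
-/

lemma morse_succ (σ : Equiv.Perm ℕ) {j : ℕ} (hj : 1 ≤ j) :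
    morse σ (j + 1) =
      morse σ j + Int.sign ((-1) ^ (j + 1) * ((σ.symm (j + 1) : ℤ) - σ.symm j)) := by
  have sign_neg_one_pow : Int.sign ((-1) ^ (j + 1)) = (-1) ^ (j + 1) := by
    rcases neg_one_pow_eq_or ℤ (j + 1) with h | h <;> simp [h]
  obtain ⟨k, rfl⟩ := Nat.exists_eq_add_of_le' hj
  rw [morse, Int.sign_mul, sign_neg_one_pow]

/-- The Morse numbers of `σ` on `{1,…,N}` form a tent: `i_j` is the distance from `j` to the nearer
of the endpoints `1` and `N`. -/
def TentMorse (N : ℕ) (σ : Equiv.Perm ℕ) : Prop :=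
  ∀ j : ℕ, 1 ≤ j → j ≤ N → morse σ j = min ((j : ℤ) - 1) (N - j)

namespace TentMorse

variable {N : ℕ} {σ : Equiv.Perm ℕ}

lemma morseProp (h : TentMorse N σ) : MorseProp N σ := by
  intro j hj hjN
  rw [h j hj hjN]
  omega

lemma filter_morse_eq (h : TentMorse N σ) {i : ℕ} (hi : 2 * i + 1 ≤ N) :
    (Finset.Icc 1 N).filter (fun j => morse σ j = i) = {i + 1, N - i} := by
  ext j
  simp only [Finset.mem_filter, Finset.mem_Icc, Finset.mem_insert, Finset.mem_singleton]
  have := h j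
  omega

lemma morseCount_eq_two (h : TentMorse N σ) {i : ℕ} (hi : 2 * i + 1 < N) :
    morseCount N σ i = 2 := by
  rw [morseCount, h.filter_morse_eq hi.le, Finset.card_pair (by omega)]

lemma morseCount_eq_one (h : TentMorse N σ) {i : ℕ} (hi : 2 * i + 1 = N) :
    morseCount N σ i = 1 := by
  have endpoints_eq : N - i = i + 1 := by omega
  rw [morseCount, h.filter_morse_eq hi.le, endpoints_eq, Finset.pair_eq_singleton,
    Finset.card_singleton]

lemma morseCount_eq_zero (h : TentMorse N σ) {i : ℕ} (hi : N < 2 * i + 1) :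
    morseCount N σ i = 0 := by
  rw [morseCount, Finset.card_eq_zero, Finset.filter_eq_empty_iff]
  intro j hj
  rw [Finset.mem_Icc] at hj
  rw [h j hj.1 hj.2]
  omega

end TentMorse

/-- The map underlying `chafeeInfante`: it reflects the even elements of `{1,…,2d+1}` and fixes all
other natural numbers. -/
def chafeeInfanteFun (d j : ℕ) : ℕ :=
  if Even j ∧ 1 ≤ j ∧ j ≤ 2 * d + 1 then 2 * d + 2 - j else j

lemma chafeeInfanteFun_involutive (d : ℕ) : Function.Involutive (chafeeInfanteFun d) := by
  intro j
  simp only [chafeeInfanteFun, Nat.even_iff]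
  split_ifs <;> omega

/-- The Chafee-Infante permutation `σ_d` of `{1,…,2d+1}`, extended to a permutation of `ℕ` by fixing
everything outside this interval. -/
def chafeeInfante (d : ℕ) : Equiv.Perm ℕ :=
  (chafeeInfanteFun_involutive d).toPerm

namespace chafeeInfante

variable {d : ℕ}

lemma apply_eq_ite (d j : ℕ) :
    chafeeInfante d j = if Even j ∧ 1 ≤ j ∧ j ≤ 2 * d + 1 then 2 * d + 2 - j else j :=
  rfl

lemma symm_eq (d : ℕ) : (chafeeInfante d).symm = chafeeInfante d :=
  (chafeeInfanteFun_involutive d).toPerm_symm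

lemma apply_of_odd {j : ℕ} (hj : Odd j) : chafeeInfante d j = j := by
  rw [apply_eq_ite, if_neg fun h => Nat.not_even_iff_odd.mpr hj h.1]

lemma eq_of_apply {σ : Equiv.Perm ℕ}
    (hodd : ∀ j, 1 ≤ j → j ≤ 2 * d + 1 → Odd j → σ j = j)
    (heven : ∀ j, 1 ≤ j → j ≤ 2 * d + 1 → Even j → σ j = 2 * d + 2 - j)
    (hfix : ∀ a, a ∉ Set.Icc 1 (2 * d + 1) → σ a = a) : σ = chafeeInfante d := by
  ext j
  rw [apply_eq_ite]
  split_ifs with hj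
  · exact heven j hj.2.1 hj.2.2 hj.1
  · by_cases hmem : j ∈ Set.Icc 1 (2 * d + 1)
    · exact hodd j hmem.1 hmem.2 (Nat.not_even_iff_odd.mp fun he => hj ⟨he, hmem⟩)
    · exact hfix j hmem

lemma dissipative (d : ℕ) : Dissipative (2 * d + 1) (chafeeInfante d) := by
  refine ⟨Equiv.bijOn _ fun j => ?_, apply_of_odd odd_one, apply_of_odd ⟨d, rfl⟩⟩
  simp only [apply_eq_ite, Nat.even_iff, Set.mem_Icc]
  split_ifs <;> omega

lemma apply_flip (d j : ℕ) :
    chafeeInfante d (2 * d + 2 - j) = 2 * d + 2 - chafeeInfante d j := by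
  simp only [apply_eq_ite, Nat.even_iff]
  split_ifs <;> omega

lemma coe_apply_eq {j : ℕ} (hj : 1 ≤ j) (hjd : j ≤ 2 * d + 1) :
    (chafeeInfante d j : ℤ) = (d + 1) + (-1) ^ j * ((d + 1) - j) := by
  rcases Nat.even_or_odd j with he | ho
  · rw [apply_eq_ite, if_pos ⟨he, hj, hjd⟩, he.neg_one_pow]
    omega
  · rw [apply_of_odd ho, ho.neg_one_pow]
    ring

lemma neg_one_pow_mul_sub {j : ℕ} (hj : 1 ≤ j) (hjd : j ≤ 2 * d) :
    (-1) ^ (j + 1) * ((chafeeInfante d (j + 1) : ℤ) - chafeeInfante d j) = 2 * d + 1 - 2 * j := by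
  have sq_eq_one : ((-1 : ℤ) ^ j) ^ 2 = 1 := by rw [← pow_mul, Even.neg_one_pow (by simp)]
  rw [coe_apply_eq (by omega) (by omega), coe_apply_eq hj (by omega), pow_succ]
  push_cast
  linear_combination (2 * d + 1 - 2 * j : ℤ) * sq_eq_one

lemma tentMorse (d : ℕ) : TentMorse (2 * d + 1) (chafeeInfante d) := by
  intro j hj
  induction j, hj using Nat.le_induction with
  | base =>
    intro _
    simp [morse]
  | succ j hj ih =>
    intro hjd
    rw [morse_succ _ hj, symm_eq, neg_one_pow_mul_sub hj (by omega), ih (by omega)]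
    rcases le_or_gt j d with hle | hlt
    · rw [Int.sign_eq_one_of_pos (by omega)]
      omega
    · rw [Int.sign_eq_neg_one_of_neg (by omega)]
      omega

end chafeeInfante

/-- the Chafee-Infante permutation `σ_d` of `{1,…,2d+1}`
(`σ_d(j) = j` for odd `j`, `σ_d(j) = N+1-j` for even `j`) is dissipative, an
involution, commutes with the flip `κ`, is Morse, and has Morse counts
`2,…,2,1` at levels `0,…,d-1,d`. -/
theorem stmt_17 (d : ℕ) (hd : 1 ≤ d) (σ : Equiv.Perm ℕ)
    (hodd : ∀ j, 1 ≤ j → j ≤ 2*d+1 → Odd j → σ j = j)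
    (heven : ∀ j, 1 ≤ j → j ≤ 2*d+1 → Even j → σ j = 2*d+2-j)
    (hfix : ∀ a, a ∉ Set.Icc 1 (2*d+1) → σ a = a) :
    Dissipative (2*d+1) σ ∧
    (∀ a, σ.symm a = σ a) ∧
    (∀ j, 1 ≤ j → j ≤ 2*d+1 → σ (2*d+2-j) = 2*d+2 - σ j) ∧
    MorseProp (2*d+1) σ ∧
    (∀ i : ℕ, i < d → morseCount (2*d+1) σ i = 2) ∧
    morseCount (2*d+1) σ d = 1 ∧
    (∀ i : ℕ, d < i → morseCount (2*d+1) σ i = 0) := by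
  obtain rfl := chafeeInfante.eq_of_apply hodd heven hfix
  have tent := chafeeInfante.tentMorse d
  exact ⟨chafeeInfante.dissipative d,
    fun a => by rw [chafeeInfante.symm_eq],
    fun j _ _ => chafeeInfante.apply_flip d j,
    tent.morseProp,
    fun i hi => tent.morseCount_eq_two (by omega),
    tent.morseCount_eq_one rfl,
    fun i hi => tent.morseCount_eq_zero (by omega)⟩
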